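/- Let $x \ge 0$, $\mu_n \to \infty$, and let $(S_n^{\mu_n})$ be the Kingman random walk of index $\mu_n$ with step law $\delta_x$. Let $(a_n)$ be an increasing positive sequence with $n^{3/2}/(a_n\sqrt{\mu_n}) \to 0$. Then $((S_n^{\mu_n})^2 - nx^2)/a_n \to 0$ in probability. -/

import Mathlib

open MeasureTheory Filter ProbabilityTheory

/-- The Kingman–Bessel normalization constant `κ_μ = ∫_{-1}^1 (1-v²)^{μ-3/2} dv`. -/
noncomputable def kappa (μ : ℝ) : ℝ := ∫ v in Set.Icc (-1 : ℝ) 1, (1 - v ^ 2) ^ (μ - 3 / 2)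

/-- The Kingman–Bessel convolution of two point measures `δ_r *_μ δ_s`:
`(δ_r *_μ δ_s)(f) = κ_μ⁻¹ ∫_{-1}^1 f(√(r²+s²+2rsv)) (1-v²)^{μ-3/2} dv`. -/
noncomputable def kingmanKernel (μ r s : ℝ) : Measure ℝ :=
  (ENNReal.ofReal (kappa μ))⁻¹ •
    Measure.map (fun v => Real.sqrt (r ^ 2 + s ^ 2 + 2 * r * s * v))
      ((volume.restrict (Set.Icc (-1 : ℝ) 1)).withDensity
        fun v => ENNReal.ofReal ((1 - v ^ 2) ^ (μ - 3 / 2)))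

/-- The Kingman–Bessel convolution of two measures on `[0,∞)`. -/
noncomputable def kingmanConv (μ : ℝ) (ν₁ ν₂ : Measure ℝ) : Measure ℝ :=
  ν₁.bind fun r => ν₂.bind fun s => kingmanKernel μ r s

/-- The degenerate convolution `•` with `(δ_r • δ_s)(f) = f(√(r²+s²))`. -/
noncomputable def bulletConv (ν₁ ν₂ : Measure ℝ) : Measure ℝ :=
  Measure.map (fun p : ℝ × ℝ => Real.sqrt (p.1 ^ 2 + p.2 ^ 2)) (ν₁.prod ν₂)

/-- `n`-fold Kingman–Bessel convolution power `ν^{(n,*_μ)}`. -/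
noncomputable def kingmanPow (μ : ℝ) (ν : Measure ℝ) : ℕ → Measure ℝ
  | 0 => Measure.dirac 0
  | n + 1 => kingmanConv μ ν (kingmanPow μ ν n)

/-- `n`-fold `•`-convolution power `ν^{(n,•)}`. -/
noncomputable def bulletPow (ν : Measure ℝ) : ℕ → Measure ℝ
  | 0 => Measure.dirac 0
  | n + 1 => bulletConv ν (bulletPow ν n)

/-!
The square of `S ∼ ν₁ *_μ ν₂` is distributed as `r² + s² + 2rsv` with `r ∼ ν₁`, `s ∼ ν₂` and `v`
independent, where `v` is centred with second moment `1 / (2μ)`. The cross term is therefore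
uncorrelated with `r² + s²` and only adds `(2 / μ) E[r²] E[s²]` to the variance. Iterating,
`(S_n^μ)²` has mean `n E[r²]` and variance `n Var[r²] + n (n - 1) E[r²]² / μ`, and Chebyshev's
inequality gives the weak law. For a point step law `Var[r²] = 0`, so the deviations have order
`n / √μ`.
-/

section Weight

lemma intervalIntegrable_one_sub_sq_rpow {p : ℝ} (hp : -1 < p) :
    IntervalIntegrable (fun v : ℝ => (1 - v ^ 2) ^ p) volume (-1) 1 := by
  have right : IntervalIntegrable (fun v : ℝ => (1 - v ^ 2) ^ p) volume 0 1 := by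
    have singular : IntervalIntegrable (fun v : ℝ => (1 - v) ^ p) volume 0 1 := by
      simpa using
        ((intervalIntegral.intervalIntegrable_rpow' hp).comp_sub_left (a := 0) (b := 1) 1).symm
    have regular : ContinuousOn (fun v : ℝ => (1 + v) ^ p) (Set.uIcc 0 1) := by
      refine ContinuousOn.rpow_const (by fun_prop) fun v hv => Or.inl ?_
      rw [Set.uIcc_of_le zero_le_one] at hv
      linarith [hv.1]
    refine (singular.mul_continuousOn regular).congr fun v hv => ?_
    rw [Set.uIoc_of_le zero_le_one] at hv
    change (1 - v) ^ p * (1 + v) ^ p = (1 - v ^ 2) ^ p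
    rw [← Real.mul_rpow (by linarith [hv.2]) (by linarith [hv.1])]
    ring_nf
  have left : IntervalIntegrable (fun v : ℝ => (1 - v ^ 2) ^ p) volume (-1) 0 := by
    simpa using (right.comp_sub_left 0).symm
  exact left.trans right

lemma integral_one_sub_sq_rpow_mul_self (p : ℝ) :
    ∫ v in (-1 : ℝ)..1, (1 - v ^ 2) ^ p * v = 0 := by
  have reflection := intervalIntegral.integral_comp_neg (a := -1) (b := 1)
    fun v : ℝ => (1 - v ^ 2) ^ p * v
  simp only [even_two.neg_pow, mul_neg, intervalIntegral.integral_neg, neg_neg] at reflection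
  linarith

lemma integral_one_sub_sq_rpow_mul_sq {p : ℝ} (hp : -1 < p) :
    (2 * p + 3) * ∫ v in (-1 : ℝ)..1, (1 - v ^ 2) ^ p * v ^ 2
      = ∫ v in (-1 : ℝ)..1, (1 - v ^ 2) ^ p := by
  have weight_int := intervalIntegrable_one_sub_sq_rpow hp
  have moment_int := (weight_int.mul_continuousOn (g := fun v => v ^ 2) (by fun_prop)).const_mul
    (2 * p + 3)
  have antideriv_cont : Continuous fun v : ℝ => v * (1 - v ^ 2) ^ (p + 1) :=
    continuous_id.mul <| (by fun_prop : Continuous fun v : ℝ => 1 - v ^ 2).rpow_const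
      fun _ => Or.inr (by linarith)
  have antideriv : ∀ v ∈ Set.Ioo (-1 : ℝ) 1, HasDerivAt (fun v : ℝ => v * (1 - v ^ 2) ^ (p + 1))
      ((1 - v ^ 2) ^ p - (2 * p + 3) * ((1 - v ^ 2) ^ p * v ^ 2)) v := by
    intro v hv
    have base_pos : 0 < 1 - v ^ 2 := by nlinarith [hv.1, hv.2]
    have base_deriv : HasDerivAt (fun v : ℝ => 1 - v ^ 2) (-(2 * v)) v := by
      simpa using (hasDerivAt_pow 2 v).const_sub 1
    refine ((hasDerivAt_id v).mul
      (base_deriv.rpow_const (p := p + 1) (Or.inl base_pos.ne'))).congr_deriv ?_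
    rw [add_sub_cancel_right, Real.rpow_add_one base_pos.ne']
    simp only [id]
    ring
  have parts := intervalIntegral.integral_eq_sub_of_hasDerivAt_of_le (by norm_num)
    antideriv_cont.continuousOn antideriv (weight_int.sub moment_int)
  have boundary : (0 : ℝ) ^ (p + 1) = 0 := Real.zero_rpow (by linarith)
  rw [intervalIntegral.integral_sub weight_int moment_int,
    intervalIntegral.integral_const_mul] at parts
  norm_num [boundary] at parts
  linarith

lemma kappa_eq_intervalIntegral (μ : ℝ) :
    kappa μ = ∫ v in (-1 : ℝ)..1, (1 - v ^ 2) ^ (μ - 3 / 2) := by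
  rw [kappa, integral_Icc_eq_integral_Ioc, intervalIntegral.integral_of_le (by norm_num)]

lemma one_sub_sq_nonneg {v : ℝ} (hv : v ∈ Set.Icc (-1 : ℝ) 1) : 0 ≤ 1 - v ^ 2 := by
  nlinarith [hv.1, hv.2]

lemma kappa_nonneg (μ : ℝ) : 0 ≤ kappa μ :=
  setIntegral_nonneg measurableSet_Icc fun _ hv => Real.rpow_nonneg (one_sub_sq_nonneg hv) _

lemma kappa_pos {μ : ℝ} (hμ : 1 / 2 < μ) : 0 < kappa μ := by
  rw [kappa_eq_intervalIntegral]
  refine intervalIntegral.intervalIntegral_pos_of_pos_on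
    (intervalIntegrable_one_sub_sq_rpow (by linarith)) (fun v hv => ?_) (by norm_num)
  exact Real.rpow_pos_of_pos (by nlinarith [hv.1, hv.2]) _

end Weight

/-- The law on `[-1, 1]` with density `κ_μ⁻¹ (1 - v²)^{μ - 3/2}`. When `2μ` is an integer `d`, it is
the law of the cosine of the angle between a fixed and a uniformly random direction in `ℝᵈ`. -/
noncomputable def cosineLaw (μ : ℝ) : Measure ℝ :=
  (ENNReal.ofReal (kappa μ))⁻¹ • (volume.restrict (Set.Icc (-1 : ℝ) 1)).withDensity
    fun v => ENNReal.ofReal ((1 - v ^ 2) ^ (μ - 3 / 2))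

namespace cosineLaw

lemma ae_mem_Icc (μ : ℝ) : ∀ᵐ v ∂cosineLaw μ, v ∈ Set.Icc (-1 : ℝ) 1 :=
  Measure.ae_smul_measure
    ((withDensity_absolutelyContinuous _ _).ae_le (ae_restrict_mem measurableSet_Icc)) _

lemma integral_eq (μ : ℝ) (f : ℝ → ℝ) :
    ∫ v, f v ∂cosineLaw μ
      = (kappa μ)⁻¹ * ∫ v in (-1 : ℝ)..1, (1 - v ^ 2) ^ (μ - 3 / 2) * f v := by
  rw [cosineLaw, integral_smul_measure, ENNReal.toReal_inv,
    ENNReal.toReal_ofReal (kappa_nonneg μ), smul_eq_mul,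
    integral_withDensity_eq_integral_toReal_smul (by fun_prop) (by simp),
    intervalIntegral.integral_of_le (by norm_num), ← integral_Icc_eq_integral_Ioc]
  congr 1
  refine setIntegral_congr_fun measurableSet_Icc fun v hv => ?_
  simp only [smul_eq_mul, ENNReal.toReal_ofReal (Real.rpow_nonneg (one_sub_sq_nonneg hv) _)]

lemma isProbabilityMeasure {μ : ℝ} (hμ : 1 / 2 < μ) : IsProbabilityMeasure (cosineLaw μ) := by
  constructor
  have weight_int : IntegrableOn (fun v : ℝ => (1 - v ^ 2) ^ (μ - 3 / 2)) (Set.Icc (-1) 1) :=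
    (intervalIntegrable_iff_integrableOn_Icc_of_le (by norm_num)).1
      (intervalIntegrable_one_sub_sq_rpow (by linarith))
  have weight_nonneg : 0 ≤ᵐ[volume.restrict (Set.Icc (-1 : ℝ) 1)]
      fun v : ℝ => (1 - v ^ 2) ^ (μ - 3 / 2) :=
    (ae_restrict_mem measurableSet_Icc).mono fun v hv => Real.rpow_nonneg (one_sub_sq_nonneg hv) _
  rw [cosineLaw, Measure.smul_apply, withDensity_apply _ MeasurableSet.univ, Measure.restrict_univ,
    ← ofReal_integral_eq_lintegral_ofReal weight_int weight_nonneg, smul_eq_mul]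
  exact ENNReal.inv_mul_cancel (by simpa using kappa_pos hμ) ENNReal.ofReal_ne_top

lemma integral_id (μ : ℝ) : ∫ v, v ∂cosineLaw μ = 0 := by
  rw [integral_eq, integral_one_sub_sq_rpow_mul_self, mul_zero]

lemma integral_sq {μ : ℝ} (hμ : 1 / 2 < μ) : ∫ v, v ^ 2 ∂cosineLaw μ = 1 / (2 * μ) := by
  have moment := integral_one_sub_sq_rpow_mul_sq (p := μ - 3 / 2) (by linarith)
  rw [← kappa_eq_intervalIntegral] at moment
  have kappa_ne := (kappa_pos hμ).ne'
  have index_ne : μ ≠ 0 := by linarith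
  rw [integral_eq, inv_mul_eq_div, div_eq_div_iff kappa_ne (mul_ne_zero two_ne_zero index_ne),
    ← moment]
  ring

lemma memLp_id {μ : ℝ} (hμ : 1 / 2 < μ) (q : ENNReal) : MemLp (fun v => v) q (cosineLaw μ) :=
  have := isProbabilityMeasure hμ
  MemLp.of_bound (by fun_prop) 1 <| (ae_mem_Icc μ).mono fun _ hv => abs_le.2 hv

end cosineLaw

section Product

variable {Ω Ω' : Type*} {mΩ : MeasurableSpace Ω} {mΩ' : MeasurableSpace Ω'}
  {P : Measure Ω} {Q : Measure Ω'}

lemma bind_map_eq_map_prod {E : Type*} [MeasurableSpace E] [SFinite Q] {g : Ω × Ω' → E}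
    (hg : Measurable g) :
    (P.bind fun r => Q.map fun s => g (r, s)) = (P.prod Q).map g := by
  have kernel_eq (r : Ω) : (Q.map fun s => g (r, s)) = (Q.map (Prod.mk r)).map g :=
    (Measure.map_map hg measurable_prodMk_left).symm
  have kernel_meas : Measurable fun r => (Q.map (Prod.mk r)).map g :=
    (Measure.measurable_map g hg).comp Measurable.map_prodMk_left
  simp only [kernel_eq]
  ext S hS
  rw [Measure.bind_apply hS kernel_meas.aemeasurable, Measure.map_apply hg hS,
    Measure.prod_apply (hg hS)]
  refine lintegral_congr fun r => ?_
  rw [Measure.map_apply hg hS, Measure.map_apply measurable_prodMk_left (hg hS)]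

lemma memLp_two_mul_prod {X : Ω → ℝ} {Y : Ω' → ℝ} (hX : MemLp X 2 P) (hY : MemLp Y 2 Q) :
    MemLp (fun q : Ω × Ω' => X q.1 * Y q.2) 2 (P.prod Q) := by
  refine (memLp_two_iff_integrable_sq (hX.1.comp_fst.mul hY.1.comp_snd)).2 ?_
  simpa only [Pi.mul_apply, mul_pow] using hX.integrable_sq.mul_prod hY.integrable_sq

lemma integral_add_mul_prod_of_integral_eq_zero [SFinite P] [IsProbabilityMeasure Q]
    {U G : Ω → ℝ} {V : Ω' → ℝ} (hU : Integrable U P) (hG : Integrable G P) (hV : Integrable V Q)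
    (hV₀ : ∫ v, V v ∂Q = 0) :
    ∫ q, (U q.1 + G q.1 * V q.2) ∂P.prod Q = ∫ ω, U ω ∂P := by
  rw [integral_add (hU.comp_fst Q) (hG.mul_prod hV), integral_prod_mul, hV₀, integral_fun_fst,
    probReal_univ, one_smul, mul_zero, add_zero]

variable [IsProbabilityMeasure P] [IsProbabilityMeasure Q]

lemma integral_add_prod {E : Type*} [NormedAddCommGroup E] [NormedSpace ℝ E] {X : Ω → E}
    {Y : Ω' → E} (hX : Integrable X P) (hY : Integrable Y Q) :
    ∫ q, (X q.1 + Y q.2) ∂P.prod Q = ∫ ω, X ω ∂P + ∫ ω, Y ω ∂Q := by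
  rw [integral_add (hX.comp_fst Q) (hY.comp_snd P), integral_fun_fst, integral_fun_snd,
    probReal_univ, probReal_univ, one_smul, one_smul]

lemma variance_add_mul_prod_of_integral_eq_zero {U G : Ω → ℝ} {V : Ω' → ℝ}
    (hU : MemLp U 2 P) (hG : MemLp G 2 P) (hV : MemLp V 2 Q) (hV₀ : ∫ v, V v ∂Q = 0) :
    Var[fun q => U q.1 + G q.1 * V q.2; P.prod Q]
      = Var[U; P] + (∫ ω, G ω ^ 2 ∂P) * ∫ v, V v ^ 2 ∂Q := by
  have noise_mem := memLp_two_mul_prod hG hV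
  have noise_mean : ∫ q, G q.1 * V q.2 ∂P.prod Q = 0 := by
    rw [integral_prod_mul, hV₀, mul_zero]
  have noise_var : Var[fun q => G q.1 * V q.2; P.prod Q]
      = (∫ ω, G ω ^ 2 ∂P) * ∫ v, V v ^ 2 ∂Q := by
    rw [variance_of_integral_eq_zero noise_mem.aemeasurable noise_mean, ← integral_prod_mul]
    simp only [mul_pow]
  have uncorrelated : cov[fun q => U q.1, fun q => G q.1 * V q.2; P.prod Q] = 0 := by
    rw [covariance_eq_sub (hU.comp_fst Q) noise_mem, noise_mean, mul_zero, sub_zero]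
    simp only [Pi.mul_apply, ← mul_assoc]
    rw [integral_prod_mul (fun ω => U ω * G ω), hV₀, mul_zero]
  rw [variance_fun_add (hU.comp_fst Q) noise_mem, uncorrelated, noise_var,
    measurePreserving_fst.variance_fun_comp hU.aemeasurable, mul_zero, add_zero]

end Product

section Convolution

variable {μ : ℝ} {ν ν₁ ν₂ : Measure ℝ}

lemma kingmanKernel_eq_map_cosineLaw (μ r s : ℝ) :
    kingmanKernel μ r s
      = (cosineLaw μ).map fun v => √(r ^ 2 + s ^ 2 + 2 * r * s * v) := by
  rw [kingmanKernel, cosineLaw, Measure.map_smul]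

lemma kingmanConv_eq_map_prod (μ : ℝ) (ν₁ ν₂ : Measure ℝ) [SFinite ν₁] [SFinite ν₂] :
    kingmanConv μ ν₁ ν₂ = ((ν₁.prod ν₂).prod (cosineLaw μ)).map
      fun q => √(q.1.1 ^ 2 + q.1.2 ^ 2 + 2 * q.1.1 * q.1.2 * q.2) := by
  have : SFinite (cosineLaw μ) := by unfold cosineLaw; infer_instance
  have inner (r : ℝ) := bind_map_eq_map_prod (P := ν₂) (Q := cosineLaw μ)
    (g := fun p => √(r ^ 2 + p.1 ^ 2 + 2 * r * p.1 * p.2)) (by fun_prop)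
  have outer := bind_map_eq_map_prod (P := ν₁) (Q := ν₂.prod (cosineLaw μ))
    (g := fun q => √(q.1 ^ 2 + q.2.1 ^ 2 + 2 * q.1 * q.2.1 * q.2.2)) (by fun_prop)
  simp only [kingmanConv, kingmanKernel_eq_map_cosineLaw, inner, outer]
  rw [← Measure.prodAssoc_prod, Measure.map_map (by fun_prop) (by fun_prop)]
  rfl

lemma sq_add_sq_add_two_mul_mul_nonneg (r s : ℝ) {v : ℝ} (hv : v ∈ Set.Icc (-1 : ℝ) 1) :
    0 ≤ r ^ 2 + s ^ 2 + 2 * r * s * v := by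
  nlinarith [sq_nonneg (r + s * v), mul_nonneg (sq_nonneg s) (one_sub_sq_nonneg hv)]

lemma isProbabilityMeasure_kingmanConv [IsProbabilityMeasure ν₁] [IsProbabilityMeasure ν₂]
    (hμ : 1 / 2 < μ) : IsProbabilityMeasure (kingmanConv μ ν₁ ν₂) := by
  have := cosineLaw.isProbabilityMeasure hμ
  rw [kingmanConv_eq_map_prod]
  exact Measure.isProbabilityMeasure_map (by fun_prop)

lemma identDistrib_sq_kingmanConv (μ : ℝ) (ν₁ ν₂ : Measure ℝ) [SFinite ν₁] [SFinite ν₂] :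
    IdentDistrib (fun t => t ^ 2)
      (fun q : (ℝ × ℝ) × ℝ => (q.1.1 ^ 2 + q.1.2 ^ 2) + 2 * (q.1.1 * q.1.2) * q.2)
      (kingmanConv μ ν₁ ν₂) ((ν₁.prod ν₂).prod (cosineLaw μ)) where
  aemeasurable_fst := by fun_prop
  aemeasurable_snd := by fun_prop
  map_eq := by
    rw [kingmanConv_eq_map_prod, Measure.map_map (by fun_prop) (by fun_prop)]
    refine Measure.map_congr ?_
    filter_upwards [Measure.quasiMeasurePreserving_snd.ae (cosineLaw.ae_mem_Icc μ)] with q hq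
    rw [Function.comp_apply, Real.sq_sqrt (sq_add_sq_add_two_mul_mul_nonneg _ _ hq)]
    ring

variable [IsProbabilityMeasure ν₁] [IsProbabilityMeasure ν₂]

lemma memLp_two_id_of_sq [IsFiniteMeasure ν] (hν : MemLp (fun t : ℝ => t ^ 2) 2 ν) :
    MemLp (fun t : ℝ => t) 2 ν :=
  (memLp_two_iff_integrable_sq (by fun_prop)).2 (hν.integrable one_le_two)

lemma memLp_two_sq_add_sq_prod (h₁ : MemLp (fun t : ℝ => t ^ 2) 2 ν₁)
    (h₂ : MemLp (fun t : ℝ => t ^ 2) 2 ν₂) :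
    MemLp (fun p : ℝ × ℝ => p.1 ^ 2 + p.2 ^ 2) 2 (ν₁.prod ν₂) :=
  (h₁.comp_fst ν₂).add (h₂.comp_snd ν₁)

lemma memLp_two_two_mul_mul_prod (h₁ : MemLp (fun t : ℝ => t ^ 2) 2 ν₁)
    (h₂ : MemLp (fun t : ℝ => t ^ 2) 2 ν₂) :
    MemLp (fun p : ℝ × ℝ => 2 * (p.1 * p.2)) 2 (ν₁.prod ν₂) :=
  (memLp_two_mul_prod (memLp_two_id_of_sq h₁) (memLp_two_id_of_sq h₂)).const_mul 2

lemma memLp_two_sq_kingmanConv (hμ : 1 / 2 < μ) (h₁ : MemLp (fun t => t ^ 2) 2 ν₁)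
    (h₂ : MemLp (fun t => t ^ 2) 2 ν₂) : MemLp (fun t => t ^ 2) 2 (kingmanConv μ ν₁ ν₂) := by
  have := cosineLaw.isProbabilityMeasure hμ
  rw [(identDistrib_sq_kingmanConv μ ν₁ ν₂).memLp_iff]
  exact ((memLp_two_sq_add_sq_prod h₁ h₂).comp_fst _).add
    (memLp_two_mul_prod (memLp_two_two_mul_mul_prod h₁ h₂) (cosineLaw.memLp_id hμ 2))

lemma integral_sq_kingmanConv (hμ : 1 / 2 < μ) (h₁ : MemLp (fun t => t ^ 2) 2 ν₁)
    (h₂ : MemLp (fun t => t ^ 2) 2 ν₂) :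
    ∫ t, t ^ 2 ∂kingmanConv μ ν₁ ν₂ = ∫ t, t ^ 2 ∂ν₁ + ∫ t, t ^ 2 ∂ν₂ := by
  have := cosineLaw.isProbabilityMeasure hμ
  rw [(identDistrib_sq_kingmanConv μ ν₁ ν₂).integral_eq,
    integral_add_mul_prod_of_integral_eq_zero
      ((memLp_two_sq_add_sq_prod h₁ h₂).integrable one_le_two)
      ((memLp_two_two_mul_mul_prod h₁ h₂).integrable one_le_two)
      ((cosineLaw.memLp_id hμ 1).integrable le_rfl) (cosineLaw.integral_id μ),
    integral_add_prod (h₁.integrable one_le_two) (h₂.integrable one_le_two)]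

lemma variance_sq_kingmanConv (hμ : 1 / 2 < μ) (h₁ : MemLp (fun t => t ^ 2) 2 ν₁)
    (h₂ : MemLp (fun t => t ^ 2) 2 ν₂) :
    Var[fun t => t ^ 2; kingmanConv μ ν₁ ν₂]
      = Var[fun t => t ^ 2; ν₁] + Var[fun t => t ^ 2; ν₂]
        + 2 / μ * ((∫ t, t ^ 2 ∂ν₁) * ∫ t, t ^ 2 ∂ν₂) := by
  have := cosineLaw.isProbabilityMeasure hμ
  have cross_sq : ∫ p : ℝ × ℝ, (2 * (p.1 * p.2)) ^ 2 ∂ν₁.prod ν₂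
      = 4 * ((∫ t, t ^ 2 ∂ν₁) * ∫ t, t ^ 2 ∂ν₂) := by
    simp only [mul_pow]
    rw [integral_const_mul, integral_prod_mul (fun r => r ^ 2) (fun s => s ^ 2)]
    norm_num
  rw [(identDistrib_sq_kingmanConv μ ν₁ ν₂).variance_eq,
    variance_add_mul_prod_of_integral_eq_zero (memLp_two_sq_add_sq_prod h₁ h₂)
      (memLp_two_two_mul_mul_prod h₁ h₂) (cosineLaw.memLp_id hμ 2) (cosineLaw.integral_id μ),
    variance_add_prod h₁ h₂, cross_sq, cosineLaw.integral_sq hμ]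
  ring

end Convolution

lemma memLp_dirac {Ω E : Type*} [MeasurableSpace Ω] [MeasurableSingletonClass Ω]
    [NormedAddCommGroup E] (f : Ω → E) (q : ENNReal) (ω : Ω) : MemLp f q (Measure.dirac ω) :=
  (memLp_const (f ω)).ae_eq (ae_eq_dirac f).symm

section Walk

variable {μ : ℝ} {ν : Measure ℝ} [IsProbabilityMeasure ν]

lemma isProbabilityMeasure_kingmanPow (hμ : 1 / 2 < μ) (n : ℕ) :
    IsProbabilityMeasure (kingmanPow μ ν n) := by
  induction n with
  | zero => exact Measure.dirac.isProbabilityMeasure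
  | succ n ih => exact isProbabilityMeasure_kingmanConv hμ

lemma memLp_two_sq_kingmanPow (hμ : 1 / 2 < μ) (hν : MemLp (fun t => t ^ 2) 2 ν) (n : ℕ) :
    MemLp (fun t => t ^ 2) 2 (kingmanPow μ ν n) := by
  induction n with
  | zero => exact memLp_dirac _ 2 0
  | succ n ih =>
    have := isProbabilityMeasure_kingmanPow (ν := ν) hμ n
    exact memLp_two_sq_kingmanConv hμ hν ih

lemma integral_sq_kingmanPow (hμ : 1 / 2 < μ) (hν : MemLp (fun t => t ^ 2) 2 ν) (n : ℕ) :
    ∫ t, t ^ 2 ∂kingmanPow μ ν n = n * ∫ t, t ^ 2 ∂ν := by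
  induction n with
  | zero => simp [kingmanPow]
  | succ n ih =>
    have := isProbabilityMeasure_kingmanPow (ν := ν) hμ n
    rw [kingmanPow, integral_sq_kingmanConv hμ hν (memLp_two_sq_kingmanPow hμ hν n), ih]
    push_cast
    ring

lemma variance_sq_kingmanPow (hμ : 1 / 2 < μ) (hν : MemLp (fun t => t ^ 2) 2 ν) (n : ℕ) :
    Var[fun t => t ^ 2; kingmanPow μ ν n]
      = n * Var[fun t => t ^ 2; ν] + n * (n - 1) / μ * (∫ t, t ^ 2 ∂ν) ^ 2 := by
  induction n with
  | zero => simp [kingmanPow, variance_dirac]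
  | succ n ih =>
    have := isProbabilityMeasure_kingmanPow (ν := ν) hμ n
    rw [kingmanPow, variance_sq_kingmanConv hμ hν (memLp_two_sq_kingmanPow hμ hν n), ih,
      integral_sq_kingmanPow hμ hν]
    push_cast
    ring

lemma kingmanPow_deviation_le (hμ : 1 / 2 < μ) (hν : MemLp (fun t => t ^ 2) 2 ν) (n : ℕ)
    {ε b : ℝ} (hε : 0 < ε) (hb : 0 < b) :
    kingmanPow μ ν n {t | ε ≤ |(t ^ 2 - n * ∫ s, s ^ 2 ∂ν) / b|}
      ≤ ENNReal.ofReal ((n * Var[fun t => t ^ 2; ν] / b ^ 2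
          + (∫ s, s ^ 2 ∂ν) ^ 2 * (n / (b * √μ)) ^ 2) / ε ^ 2) := by
  have := isProbabilityMeasure_kingmanPow (ν := ν) hμ n
  have chebyshev := meas_ge_le_variance_div_sq (memLp_two_sq_kingmanPow hμ hν n) (mul_pos hε hb)
  simp only [abs_div, abs_of_pos hb, le_div_iff₀ hb]
  rw [integral_sq_kingmanPow hμ hν, variance_sq_kingmanPow hμ hν] at chebyshev
  refine chebyshev.trans (ENNReal.ofReal_le_ofReal ?_)
  have index_pos : 0 < μ := by linarith
  rw [div_pow, mul_pow b, Real.sq_sqrt index_pos.le]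
  calc (n * Var[fun t => t ^ 2; ν] + n * (n - 1) / μ * (∫ s, s ^ 2 ∂ν) ^ 2) / (ε * b) ^ 2
      ≤ (n * Var[fun t => t ^ 2; ν] + n * n / μ * (∫ s, s ^ 2 ∂ν) ^ 2) / (ε * b) ^ 2 := by
        gcongr
        linarith
    _ = _ := by field_simp

end Walk

lemma natCast_le_rpow {p : ℝ} (hp : 1 ≤ p) (n : ℕ) : (n : ℝ) ≤ (n : ℝ) ^ p := by
  rcases n.eq_zero_or_pos with rfl | hn
  · simp [Real.zero_rpow (by linarith : p ≠ 0)]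
  · exact Real.self_le_rpow_of_one_le (by exact_mod_cast hn) hp

lemma tendsto_natCast_div_of_rpow {p : ℝ} (hp : 1 ≤ p) {b : ℕ → ℝ} (hb : ∀ n, 0 ≤ b n)
    (h : Tendsto (fun n : ℕ => (n : ℝ) ^ p / b n) atTop (nhds 0)) :
    Tendsto (fun n : ℕ => n / b n) atTop (nhds 0) :=
  squeeze_zero (fun n => div_nonneg n.cast_nonneg (hb n))
    (fun n => div_le_div_of_nonneg_right (natCast_le_rpow hp n) (hb n)) h

theorem kingman_weak_law_general (ν : Measure ℝ) [IsProbabilityMeasure ν]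
    (hν : MemLp (fun t => t ^ 2) 2 ν) (μs : ℕ → ℝ) (hμs : ∀ n, μs n > 1 / 2)
    (a : ℕ → ℝ) (ha : ∀ n, 0 < a n)
    (hvar : Tendsto (fun n : ℕ => n * Var[fun t => t ^ 2; ν] / a n ^ 2) atTop (nhds 0))
    (hlim : Tendsto (fun n : ℕ => n / (a n * √(μs n))) atTop (nhds 0)) :
    ∀ ε > (0 : ℝ),
      Tendsto
        (fun n : ℕ => kingmanPow (μs n) ν n
          {t : ℝ | ε ≤ |(t ^ 2 - n * ∫ s, s ^ 2 ∂ν) / a n|})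
        atTop (nhds 0) := by
  intro ε hε
  refine tendsto_of_tendsto_of_tendsto_of_le_of_le tendsto_const_nhds ?_ (fun _ => zero_le)
    fun n => kingmanPow_deviation_le (hμs n) hν n hε (ha n)
  simpa using ENNReal.tendsto_ofReal
    ((hvar.add ((hlim.pow 2).const_mul ((∫ s, s ^ 2 ∂ν) ^ 2))).div_const (ε ^ 2))

/-- Weak law for Kingman random walks with point step law `δ_x`:
if `n^{3/2}/(aₙ√μₙ) → 0` then `((S_n^{μ_n})² - nx²)/aₙ → 0` in probability. -/
theorem kingman_weak_law (x : ℝ) (hx : 0 ≤ x)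
    (μs : ℕ → ℝ) (hμs : ∀ n, μs n > 1 / 2) (hμinf : Tendsto μs atTop atTop)
    (a : ℕ → ℝ) (ha : ∀ n, 0 < a n) (hmono : Monotone a)
    (hlim : Tendsto (fun n : ℕ => (n : ℝ) ^ ((3 : ℝ) / 2) / (a n * Real.sqrt (μs n)))
      atTop (nhds 0)) :
    ∀ ε > (0 : ℝ),
      Tendsto
        (fun n : ℕ => kingmanPow (μs n) (Measure.dirac x) n
          {t : ℝ | ε ≤ |(t ^ 2 - n * x ^ 2) / a n|})
        atTop (nhds 0) := by
  have linear_lim := tendsto_natCast_div_of_rpow (by norm_num)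
    (fun n => mul_nonneg (ha n).le (Real.sqrt_nonneg (μs n))) hlim
  simpa using kingman_weak_law_general (Measure.dirac x) (memLp_dirac _ 2 x) μs hμs a ha
    (by simp [variance_dirac]) linear_lim
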